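/- Existence of an optimal coupling for the Fused Network Gromov–Wasserstein distance: given two network tuples g_X = (X, ψ_X, φ_X, ω_X, μ_X) and g_Y = (Y, ψ_Y, φ_Y, ω_Y, μ_Y), for any exponents p, q ∈ [1, ∞) and any trade-off parameters (α, β) ∈ [0,1]², there exists a coupling μ* ∈ Π(μ_X, μ_Y) such that FNGW_{α,β,q,p}(g_X, g_Y) = E_{α,β,q,p}(g_X, g_Y, μ*); that is, the infimum defining FNGW is attained. -/

import Mathlib

open MeasureTheory

/-- The set of couplings of two probability measures: Borel probability measures on the
product whose marginals are the given measures. -/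
def couplings {X Y : Type*} [MeasurableSpace X] [MeasurableSpace Y]
    (μX : Measure X) (μY : Measure Y) : Set (Measure (X × Y)) :=
  {μ | IsProbabilityMeasure μ ∧ μ.map Prod.fst = μX ∧ μ.map Prod.snd = μY}

/-- The FNGW cost functional `E_{α,β,q,p}(g_X, g_Y, μ)`. -/
noncomputable def fngwCost {X Y Ψ Ω : Type*} [MeasurableSpace X] [MeasurableSpace Y]
    [MetricSpace Ψ] [MetricSpace Ω]
    (α β q p : ℝ)
    (ψX : X → Ψ) (φX : X × X → ℝ) (ωX : X × X → Ω)
    (ψY : Y → Ψ) (φY : Y × Y → ℝ) (ωY : Y × Y → Ω)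
    (μ : Measure (X × Y)) : ℝ :=
  (∫ w : (X × Y) × (X × Y),
      ((1 - α - β) * dist (ψX w.1.1) (ψY w.1.2) ^ q
        + α * dist (ωX (w.1.1, w.2.1)) (ωY (w.1.2, w.2.2)) ^ q
        + β * |φX (w.1.1, w.2.1) - φY (w.1.2, w.2.2)| ^ q) ^ p
      ∂(μ.prod μ)) ^ (1 / p)

/-- The Fused Network Gromov–Wasserstein distance: infimum of the cost over couplings. -/
noncomputable def FNGW {X Y Ψ Ω : Type*} [MeasurableSpace X] [MeasurableSpace Y]
    [MetricSpace Ψ] [MetricSpace Ω]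
    (α β q p : ℝ)
    (ψX : X → Ψ) (φX : X × X → ℝ) (ωX : X × X → Ω)
    (ψY : Y → Ψ) (φY : Y × Y → ℝ) (ωY : Y × Y → Ω)
    (μX : Measure X) (μY : Measure Y) : ℝ :=
  sInf ((fngwCost α β q p ψX φX ωX ψY φY ωY) '' couplings μX μY)

/-- Two functions with bounded range have bounded mutual distance. -/
lemma exists_forall_dist_le_of_isBounded_range {A B M : Type*} [PseudoMetricSpace M]
    {f : A → M} {g : B → M} (hf : Bornology.IsBounded (Set.range f))
    (hg : Bornology.IsBounded (Set.range g)) : ∃ C, ∀ a b, dist (f a) (g b) ≤ C := by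
  obtain ⟨C, hC⟩ := Metric.isBounded_iff.1 (hf.union hg)
  exact ⟨C, fun a b ↦ hC (.inl ⟨a, rfl⟩) (.inr ⟨b, rfl⟩)⟩

/-- The set of couplings is compact for the topology of weak convergence. -/
lemma isCompact_setOf_mem_couplings {X Y : Type*}
    [MeasurableSpace X] [TopologicalSpace X] [PolishSpace X] [BorelSpace X]
    [MeasurableSpace Y] [TopologicalSpace Y] [PolishSpace Y] [BorelSpace Y]
    (μX : Measure X) (μY : Measure Y) [IsProbabilityMeasure μX] [IsProbabilityMeasure μY] :
    IsCompact {μ : ProbabilityMeasure (X × Y) | (μ : Measure (X × Y)) ∈ couplings μX μY} := by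
  let νX : ProbabilityMeasure X := ⟨μX, inferInstance⟩
  let νY : ProbabilityMeasure Y := ⟨μY, inferInstance⟩
  have hclosed :
      IsClosed {μ : ProbabilityMeasure (X × Y) | (μ : Measure (X × Y)) ∈ couplings μX μY} := by
    have heq : {μ : ProbabilityMeasure (X × Y) | (μ : Measure (X × Y)) ∈ couplings μX μY} =
        {μ | μ.map measurable_fst.aemeasurable = νX} ∩
        {μ | μ.map measurable_snd.aemeasurable = νY} := by
      ext μ
      exact ⟨fun h ↦ ⟨Subtype.ext h.2.1, Subtype.ext h.2.2⟩,
        fun h ↦ ⟨inferInstance, congrArg Subtype.val h.1, congrArg Subtype.val h.2⟩⟩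
    rw [heq]
    exact (isClosed_eq (ProbabilityMeasure.continuous_map continuous_fst) continuous_const).inter
      (isClosed_eq (ProbabilityMeasure.continuous_map continuous_snd) continuous_const)
  rw [← hclosed.closure_eq]
  apply isCompact_closure_of_isTightMeasureSet
  apply IsTightMeasureSet.prodMk
  · refine (isTightMeasureSet_singleton (μ := μX)).subset ?_
    rintro _ ⟨_, ⟨μ, hμ, rfl⟩, rfl⟩
    exact hμ.2.1
  · refine (isTightMeasureSet_singleton (μ := μY)).subset ?_
    rintro _ ⟨_, ⟨μ, hμ, rfl⟩, rfl⟩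
    exact hμ.2.2

/-- The integral of a bounded continuous function against `μ ⊗ μ` is weakly continuous in `μ`. -/
lemma continuous_integral_prod_self {Z : Type*} [MeasurableSpace Z] [TopologicalSpace Z]
    [PolishSpace Z] [BorelSpace Z] {f : Z × Z → ℝ} (hf : Continuous f)
    (hfb : Bornology.IsBounded (Set.range f)) :
    Continuous fun μ : ProbabilityMeasure Z ↦
      ∫ w, f w ∂((μ : Measure Z).prod (μ : Measure Z)) := by
  obtain ⟨C, hC⟩ := Metric.isBounded_iff.1 hfb
  let g : BoundedContinuousFunction (Z × Z) ℝ :=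
    .mkOfBound ⟨f, hf⟩ C fun x y ↦ hC ⟨x, rfl⟩ ⟨y, rfl⟩
  exact (ProbabilityMeasure.continuous_integral_boundedContinuousFunction g).comp
    (ProbabilityMeasure.continuous_prod.comp (continuous_id.prodMk continuous_id))

/-- **Existence of an optimal coupling for the FNGW distance.** -/
theorem fngw_exists_optimal_coupling
    {X Y Ψ Ω : Type*}
    [MeasurableSpace X] [TopologicalSpace X] [PolishSpace X] [BorelSpace X]
    [MeasurableSpace Y] [TopologicalSpace Y] [PolishSpace Y] [BorelSpace Y]
    [MetricSpace Ψ] [MetricSpace Ω]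
    (ψX : X → Ψ) (φX : X × X → ℝ) (ωX : X × X → Ω)
    (ψY : Y → Ψ) (φY : Y × Y → ℝ) (ωY : Y × Y → Ω)
    (μX : Measure X) (μY : Measure Y)
    [IsProbabilityMeasure μX] [IsProbabilityMeasure μY]
    [μX.IsOpenPosMeasure] [μY.IsOpenPosMeasure]
    (hψX : Continuous ψX) (hψXb : Bornology.IsBounded (Set.range ψX))
    (hφX : Continuous φX) (hφXb : Bornology.IsBounded (Set.range φX))
    (hωX : Continuous ωX) (hωXb : Bornology.IsBounded (Set.range ωX))
    (hψY : Continuous ψY) (hψYb : Bornology.IsBounded (Set.range ψY))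
    (hφY : Continuous φY) (hφYb : Bornology.IsBounded (Set.range φY))
    (hωY : Continuous ωY) (hωYb : Bornology.IsBounded (Set.range ωY))
    (p q α β : ℝ) (hp : 1 ≤ p) (hq : 1 ≤ q)
    (hα : α ∈ Set.Icc (0 : ℝ) 1) (hβ : β ∈ Set.Icc (0 : ℝ) 1) :
    ∃ μ ∈ couplings μX μY,
      FNGW α β q p ψX φX ωX ψY φY ωY μX μY
        = fngwCost α β q p ψX φX ωX ψY φY ωY μ := by
  have hq0 : 0 ≤ q := by linarith
  have hp0 : 0 ≤ p := by linarith
  have hpinv : 0 ≤ 1 / p := by positivity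
  obtain ⟨A, hA⟩ := exists_forall_dist_le_of_isBounded_range hψXb hψYb
  obtain ⟨B, hB⟩ := exists_forall_dist_le_of_isBounded_range hωXb hωYb
  obtain ⟨C, hC⟩ := exists_forall_dist_le_of_isBounded_range hφXb hφYb
  let F : ℝ × ℝ × ℝ → ℝ := fun t ↦
    ((1 - α - β) * t.1 ^ q + α * t.2.1 ^ q + β * t.2.2 ^ q) ^ p
  have hF : Continuous F := by
    have h (r : ℝ) (hr : 0 ≤ r) : Continuous fun x : ℝ ↦ x ^ r := Real.continuous_rpow_const hr
    have := h q hq0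
    exact (h p hp0).comp (by fun_prop)
  let T : (X × Y) × (X × Y) → ℝ × ℝ × ℝ := fun w ↦
    (dist (ψX w.1.1) (ψY w.1.2), dist (ωX (w.1.1, w.2.1)) (ωY (w.1.2, w.2.2)),
      |φX (w.1.1, w.2.1) - φY (w.1.2, w.2.2)|)
  have hT : Continuous T := by fun_prop
  have hbounded : Bornology.IsBounded (Set.range (F ∘ T)) := by
    refine ((isCompact_Icc (a := ((0 : ℝ), (0 : ℝ), (0 : ℝ))) (b := (A, B, C))).image
      hF).isBounded.subset ?_
    rintro _ ⟨w, rfl⟩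
    exact ⟨T w, ⟨⟨dist_nonneg, dist_nonneg, abs_nonneg _⟩, ⟨hA _ _, hB _ _, hC _ _⟩⟩, rfl⟩
  have hcost : Continuous fun μ : ProbabilityMeasure (X × Y) ↦
      fngwCost α β q p ψX φX ωX ψY φY ωY (μ : Measure (X × Y)) :=
    (Real.continuous_rpow_const hpinv).comp
      (continuous_integral_prod_self (hF.comp hT) hbounded)
  have hprod : μX.prod μY ∈ couplings μX μY := ⟨inferInstance, by simp, by simp⟩
  obtain ⟨μ, hμ, hmin⟩ := (isCompact_setOf_mem_couplings μX μY).exists_isMinOn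
    ⟨⟨μX.prod μY, hprod.1⟩, hprod⟩ hcost.continuousOn
  refine ⟨μ, hμ, IsLeast.csInf_eq ⟨⟨_, hμ, rfl⟩, ?_⟩⟩
  rintro _ ⟨ν, hν, rfl⟩
  exact hmin (a := (⟨ν, hν.1⟩ : ProbabilityMeasure (X × Y))) hν
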